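/- Let g be an n-Filippov algebra over K with n > 2 and dim_K g ≥ n. If _nH^Lie_k(g;K) = 0 for all k ≥ 0, then _nHL_k(g;K) = 0 for all k ≥ 0. -/

import Mathlib

open scoped TensorProduct
open PiTensorProduct

/-- The pure wedge `a₁ ∧ … ∧ a_m` as an element of the `m`-th exterior power `⋀[K]^m g`. -/
noncomputable def wedge (K : Type) [Field K] {g : Type} [AddCommGroup g] [Module K g] {m : ℕ}
    (a : Fin m → g) : ⋀[K]^m g :=
  ⟨ExteriorAlgebra.ιMulti K m a, ExteriorAlgebra.ιMulti_range K m ⟨a, rfl⟩⟩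

/-- Quotient of a submodule `Z` (the cycles) by a submodule `B` of it (the boundaries). -/
def HqOf (K : Type) [Field K] (N : Type) [AddCommGroup N] [Module K N]
    (Z : Submodule K N) (B : Submodule K Z) : Type := Z ⧸ B

/-- Cycles in degree `k` of a nonnegatively graded chain complex (in degree `0` everything
is a cycle). -/
def cyclesC (K : Type) [Field K] (C : ℕ → Type) [∀ k, AddCommGroup (C k)]
    [∀ k, Module K (C k)] (d : ∀ k, C (k+1) →ₗ[K] C k) : ∀ k, Submodule K (C k)
  | 0 => ⊤
  | (k+1) => LinearMap.ker (d k)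

/-- Boundaries in degree `k`, as a submodule of the cycles. -/
def boundariesC (K : Type) [Field K] (C : ℕ → Type) [∀ k, AddCommGroup (C k)]
    [∀ k, Module K (C k)] (d : ∀ k, C (k+1) →ₗ[K] C k) (k : ℕ) :
    Submodule K (cyclesC K C d k) :=
  Submodule.comap (cyclesC K C d k).subtype (LinearMap.range (d k))

/-- Homology in degree `k` of a nonnegatively graded chain complex. -/
def homologyC (K : Type) [Field K] (C : ℕ → Type) [∀ k, AddCommGroup (C k)]
    [∀ k, Module K (C k)] (d : ∀ k, C (k+1) →ₗ[K] C k) (k : ℕ) : Type :=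
  HqOf K (C k) (cyclesC K C d k) (boundariesC K C d k)

/-!
The kernel of the projection `⨂^m g → ⋀^m g` acts trivially on `g` and multiplies to zero from the
right, because both brackets depend on their right argument only through its action on `g`. A
trailing letter in this kernel therefore passes through the Loday boundary unchanged, so the chains
having such a letter behave like chains of lower degree, which are exact by induction. Filter them
by how far to the right a kernel letter occurs. A contracting homotopy in lower degree extends to
the next stage of the filtration by carrying one more trailing letter along, so every cycle can be
corrected by boundaries until its kernel letters are gone, and then the exactness of the exterior
complex applies.

With the given signs the boundary `d` does not square to zero: `d² = 2A²`, where `A` is the part of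
`d` in which a letter acts on the coefficient. Since subtracting `d y` from a cycle leaves a cycle
only when `d² y = 0`, the extra letter is inserted by an operation commuting with `A`.
-/

section LinearAlgebra

variable {K X Y Z : Type*} [Field K] [AddCommGroup X] [Module K X] [AddCommGroup Y] [Module K Y]
  [AddCommGroup Z] [Module K Z]

theorem exists_comp_comp_eq_self (g : Y →ₗ[K] Z) : ∃ r : Z →ₗ[K] Y, ∀ y, g (r (g y)) = g y := by
  obtain ⟨s, hs⟩ := g.rangeRestrict.exists_rightInverse_of_surjective g.range_rangeRestrict
  obtain ⟨r, hr⟩ := LinearMap.exists_extend s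
  refine ⟨r, fun y => ?_⟩
  calc g (r (g y)) = g (s (g.rangeRestrict y)) :=
        congrArg g (LinearMap.congr_fun hr (g.rangeRestrict y))
    _ = g y := congrArg Subtype.val (LinearMap.congr_fun hs (g.rangeRestrict y))

theorem exists_contraction {f : X →ₗ[K] Y} {g : Y →ₗ[K] Z}
    (h_exact : LinearMap.ker g ≤ LinearMap.range f) :
    ∃ (h : Y →ₗ[K] X) (r : Z →ₗ[K] Y), (∀ y, f (h y) + r (g y) = y) ∧ ∀ y, g (f (h y)) = 0 := by
  obtain ⟨q, hq⟩ := exists_comp_comp_eq_self f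
  obtain ⟨r, hr⟩ := exists_comp_comp_eq_self g
  have map_sub_eq_zero (y : Y) : g (y - r (g y)) = 0 := by rw [map_sub, hr, sub_self]
  have f_h (y : Y) : f (q (y - r (g y))) = y - r (g y) := by
    obtain ⟨x, hx⟩ := h_exact (map_sub_eq_zero y)
    rw [← hx, hq]
  refine ⟨q ∘ₗ (LinearMap.id - r ∘ₗ g), r, fun y => ?_, fun y => ?_⟩
  · simp only [LinearMap.comp_apply, LinearMap.sub_apply, LinearMap.id_apply, f_h, sub_add_cancel]
  · simp only [LinearMap.comp_apply, LinearMap.sub_apply, LinearMap.id_apply, f_h, map_sub_eq_zero]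

end LinearAlgebra

/-- Every cycle of degree `k` for `d` is a boundary. It is not assumed that `d` squares to zero. -/
def IsExactAt {R : Type*} [CommRing R] {C : ℕ → Type*} [∀ k, AddCommGroup (C k)]
    [∀ k, Module R (C k)] (d : ∀ k, C (k + 1) →ₗ[R] C k) : ℕ → Prop
  | 0 => LinearMap.range (d 0) = ⊤
  | k + 1 => LinearMap.ker (d k) ≤ LinearMap.range (d (k + 1))

theorem subsingleton_homologyC_iff {K : Type} [Field K] {C : ℕ → Type} [∀ k, AddCommGroup (C k)]
    [∀ k, Module K (C k)] (d : ∀ k, C (k + 1) →ₗ[K] C k) (k : ℕ) :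
    Subsingleton (homologyC K C d k) ↔ IsExactAt d k := by
  have quotient_iff : Subsingleton (homologyC K C d k) ↔ boundariesC K C d k = ⊤ :=
    Submodule.Quotient.subsingleton_iff
  rw [quotient_iff]
  cases k with
  | zero =>
    exact Submodule.comap_subtype_eq_top.trans top_le_iff
  | succ k => exact Submodule.comap_subtype_eq_top

section TensorDerivation

variable {R ι V : Type*} [CommRing R] [AddCommGroup V] [Module R V] [DecidableEq ι]

/-- The endomorphism of `⨂[R] _ : ι, V` applying `f` to the `i`-th tensor factor. -/
noncomputable def tensorSlot (i : ι) : Module.End R V →ₗ[R] Module.End R (⨂[R] _ : ι, V) :=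
  (PiTensorProduct.mapMultilinear R (fun _ : ι => V) fun _ => V).toLinearMap
    (fun _ => LinearMap.id) i

theorem tensorSlot_tprod (i : ι) (f : Module.End R V) (a : ι → V) :
    tensorSlot i f (tprod R a) = tprod R (Function.update a i (f (a i))) := by
  simp only [tensorSlot, MultilinearMap.toLinearMap_apply, mapMultilinear_apply, map_tprod]
  congr 1
  ext j
  obtain rfl | hij := eq_or_ne j i <;> simp [*]

theorem tensorSlot_mul (i : ι) (f g : Module.End R V) :
    tensorSlot i (f * g) = tensorSlot i f * tensorSlot i g := by
  ext a
  simp [tensorSlot_tprod]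

theorem commute_tensorSlot {i j : ι} (hij : i ≠ j) (f g : Module.End R V) :
    Commute (tensorSlot i f) (tensorSlot j g) := by
  ext a
  simp [tensorSlot_tprod, hij, hij.symm, Function.update_comm hij]

variable [Fintype ι]

/-- The extension of an endomorphism of `V` to the tensor power of `V` by the Leibniz rule. -/
noncomputable def tensorDerivation : Module.End R V →ₗ[R] Module.End R (⨂[R] _ : ι, V) :=
  ∑ i, tensorSlot i

theorem tensorDerivation_tprod (f : Module.End R V) (a : ι → V) :
    tensorDerivation f (tprod R a) = ∑ i, tprod R (Function.update a i (f (a i))) := by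
  simp only [tensorDerivation, LinearMap.sum_apply, tensorSlot_tprod]

theorem tensorDerivation_commutator (f g : Module.End R V) :
    tensorDerivation (ι := ι) (f * g - g * f) =
      tensorDerivation f * tensorDerivation g - tensorDerivation g * tensorDerivation f := by
  have diagonal (i : ι) :
      ∑ j : ι, (tensorSlot i f * tensorSlot j g - tensorSlot j g * tensorSlot i f)
        = tensorSlot i (f * g - g * f) := by
    rw [Finset.sum_eq_single i (fun j _ hji => sub_eq_zero.2 (commute_tensorSlot hji.symm f g))
      (by simp), map_sub, tensorSlot_mul, tensorSlot_mul]
  simp only [tensorDerivation, LinearMap.sum_apply, Finset.sum_mul_sum, ← diagonal,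
    Finset.sum_sub_distrib]
  rw [Finset.sum_comm (f := fun i j => tensorSlot j g * tensorSlot i f)]

end TensorDerivation

/-- The module `M ⊗ D^{⊗ k}` of `k`-chains of the Loday complex `CL_*(D, M)`. The factors of
`D^{⊗ k}` are called letters. -/
abbrev LodayChain (R M D : Type*) [CommRing R] [AddCommGroup M] [Module R M] [AddCommGroup D]
    [Module R D] (k : ℕ) : Type _ :=
  M ⊗[R] ⨂[R]^k D

namespace LodayChain

theorem snoc_comp_succAbove_castSucc {α : Type*} {k : ℕ} (hs : Fin (k + 1) → α) (h : α)
    (j : Fin (k + 1)) :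
    (fun t => (Fin.snoc hs h : Fin (k + 2) → α) (j.castSucc.succAbove t))
      = (Fin.snoc (fun t => hs (j.succAbove t)) h : Fin (k + 1) → α) := by
  ext t
  induction t using Fin.lastCases with
  | last => simp [Fin.succAbove_castSucc_of_le j (Fin.last k) (Fin.le_last _)]
  | cast t => simp [Fin.castSucc_succAbove_castSucc]

section Letters

variable {R M D X : Type*} [CommRing R] [AddCommGroup M] [Module R M] [AddCommGroup D] [Module R D]
  [AddCommGroup X] [Module R X]

theorem hom_ext {k : ℕ} {f f' : LodayChain R M D k →ₗ[R] X}
    (h : ∀ v hs, f (v ⊗ₜ tprod R hs) = f' (v ⊗ₜ tprod R hs)) : f = f' := by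
  ext v hs
  exact h v hs

/-- Insertion of a last letter. -/
noncomputable def append (k : ℕ) : D →ₗ[R] LodayChain R M D k →ₗ[R] LodayChain R M D (k + 1) :=
  LinearMap.lTensorHom M ∘ₗ
    (PiTensorProduct.lift (tprod R : MultilinearMap R (fun _ : Fin (k + 1) => D) _).curryRight).flip

/-- Insertion of a first letter. -/
noncomputable def prepend (k : ℕ) : D →ₗ[R] LodayChain R M D k →ₗ[R] LodayChain R M D (k + 1) :=
  LinearMap.lTensorHom M ∘ₗ PiTensorProduct.lift.toLinearMap ∘ₗ
    (tprod R : MultilinearMap R (fun _ : Fin (k + 1) => D) _).curryLeft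

theorem append_tprod (k : ℕ) (h : D) (v : M) (hs : Fin k → D) :
    append k h (v ⊗ₜ[R] tprod R hs) = v ⊗ₜ[R] tprod R (Fin.snoc hs h : Fin (k + 1) → D) := by
  simp [append]

theorem prepend_tprod (k : ℕ) (h : D) (v : M) (hs : Fin k → D) :
    prepend k h (v ⊗ₜ[R] tprod R hs) = v ⊗ₜ[R] tprod R (Fin.cons h hs : Fin (k + 1) → D) := by
  simp [prepend]

theorem hom_ext_append {k : ℕ} {f f' : LodayChain R M D (k + 1) →ₗ[R] X}
    (h : ∀ l x, f (append k l x) = f' (append k l x)) : f = f' :=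
  hom_ext fun v hs => by
    rw [← Fin.snoc_init_self hs, ← append_tprod, h]

theorem prepend_zero (l : D) (x : LodayChain R M D 0) : prepend 0 l x = append 0 l x := by
  suffices prepend 0 l = append 0 l from LinearMap.congr_fun this x
  refine hom_ext fun v hs => ?_
  have cons_eq_snoc : (Fin.cons l hs : Fin 1 → D) = Fin.snoc hs l := by
    ext i
    fin_cases i
    rfl
  rw [append_tprod, prepend_tprod, cons_eq_snoc]

theorem prepend_append (k : ℕ) (l h : D) (x : LodayChain R M D k) :
    prepend (k + 1) l (append k h x) = append (k + 1) h (prepend k l x) := by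
  suffices prepend (k + 1) l ∘ₗ append k h = append (k + 1) h ∘ₗ prepend k l from
    LinearMap.congr_fun this x
  refine hom_ext fun v hs => ?_
  simp only [LinearMap.comp_apply, append_tprod, prepend_tprod, Fin.cons_snoc_eq_snoc_cons]

/-- The linear map on `k + 1`-chains with prescribed values on the chains `append k h x`. -/
noncomputable def liftAppend {k : ℕ} (f : D →ₗ[R] LodayChain R M D k →ₗ[R] X) :
    LodayChain R M D (k + 1) →ₗ[R] X :=
  TensorProduct.lift <|
    (PiTensorProduct.lift.toLinearMap ∘ₗ
      (multilinearCurryRightEquiv R (fun _ : Fin (k + 1) => D) X).symm.toLinearMap ∘ₗ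
      PiTensorProduct.lift.symm.toLinearMap) ∘ₗ TensorProduct.curry f.flip

@[simp]
theorem liftAppend_append {k : ℕ} (f : D →ₗ[R] LodayChain R M D k →ₗ[R] X) (h : D)
    (x : LodayChain R M D k) : liftAppend f (append k h x) = f h x := by
  suffices liftAppend f ∘ₗ append k h = f h from LinearMap.congr_fun this x
  refine hom_ext fun v hs => ?_
  rw [LinearMap.comp_apply, append_tprod]
  simp [liftAppend, multilinearCurryRightEquiv]

end Letters

section Boundary

variable {R M D : Type*} [CommRing R] [AddCommGroup M] [Module R M] [AddCommGroup D] [Module R D]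

/-- The right action `ρ` of `D` on `M`, extended to chains by leaving the letters unchanged. -/
noncomputable def coefAct (ρ : M →ₗ[R] D →ₗ[R] M) (k : ℕ) :
    D →ₗ[R] Module.End R (LodayChain R M D k) :=
  LinearMap.rTensorHom _ ∘ₗ ρ.flip

/-- The right multiplications of the bracket `β`, extended to chains as derivations of the word of
letters. -/
noncomputable def letterAct (β : D →ₗ[R] D →ₗ[R] D) (k : ℕ) :
    D →ₗ[R] Module.End R (LodayChain R M D k) :=
  LinearMap.lTensorHom M ∘ₗ tensorDerivation ∘ₗ β.flip

/-- The operation by which a letter moves to the left in the Loday boundary. The coefficient enters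
with the opposite sign, so this is not an action of the Leibniz algebra. -/
noncomputable def totalAct (ρ : M →ₗ[R] D →ₗ[R] M) (β : D →ₗ[R] D →ₗ[R] D) (k : ℕ) :
    D →ₗ[R] Module.End R (LodayChain R M D k) :=
  letterAct β k - coefAct ρ k

variable (ρ : M →ₗ[R] D →ₗ[R] M) (β : D →ₗ[R] D →ₗ[R] D)

theorem coefAct_tmul (k : ℕ) (h : D) (v : M) (t : ⨂[R]^k D) :
    coefAct ρ k h (v ⊗ₜ t) = ρ v h ⊗ₜ t := by
  simp [coefAct]

theorem letterAct_tprod (k : ℕ) (h : D) (v : M) (hs : Fin k → D) :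
    letterAct β k h (v ⊗ₜ[R] tprod R hs)
      = ∑ i, v ⊗ₜ[R] tprod R (Function.update hs i (β (hs i) h)) := by
  simp [letterAct, tensorDerivation_tprod, TensorProduct.tmul_sum]

theorem coefAct_append (k : ℕ) (h l : D) (x : LodayChain R M D k) :
    coefAct ρ (k + 1) h (append k l x) = append k l (coefAct ρ k h x) := by
  suffices coefAct ρ (k + 1) h ∘ₗ append k l = append k l ∘ₗ coefAct ρ k h from
    LinearMap.congr_fun this x
  refine hom_ext fun v hs => ?_
  simp only [LinearMap.comp_apply, append_tprod, coefAct_tmul]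

theorem coefAct_prepend (k : ℕ) (h l : D) (x : LodayChain R M D k) :
    coefAct ρ (k + 1) h (prepend k l x) = prepend k l (coefAct ρ k h x) := by
  suffices coefAct ρ (k + 1) h ∘ₗ prepend k l = prepend k l ∘ₗ coefAct ρ k h from
    LinearMap.congr_fun this x
  refine hom_ext fun v hs => ?_
  simp only [LinearMap.comp_apply, prepend_tprod, coefAct_tmul]

theorem letterAct_append (k : ℕ) (h l : D) (x : LodayChain R M D k) :
    letterAct β (k + 1) h (append k l x) = append k l (letterAct β k h x) + append k (β l h) x := by
  suffices letterAct β (k + 1) h ∘ₗ append k l =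
      append k l ∘ₗ letterAct β k h + append k (β l h) from LinearMap.congr_fun this x
  refine hom_ext fun v hs => ?_
  simp only [LinearMap.comp_apply, LinearMap.add_apply, append_tprod, letterAct_tprod,
    Fin.sum_univ_castSucc, Fin.snoc_castSucc, Fin.snoc_last, map_sum, Fin.snoc_update,
    Fin.update_snoc_last]

theorem totalAct_append (k : ℕ) (h l : D) (x : LodayChain R M D k) :
    totalAct ρ β (k + 1) h (append k l x)
      = append k l (totalAct ρ β k h x) + append k (β l h) x := by
  simp only [totalAct, LinearMap.sub_apply, letterAct_append, coefAct_append, map_sub]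
  abel

/-- The alternating sum of the faces of a chain, where the `j`-th face removes the `j`-th letter and
lets it act through `τ` on the chain formed by the coefficient and the preceding letters. -/
noncomputable def faceSum (τ : ∀ k, D →ₗ[R] Module.End R (LodayChain R M D k)) :
    ∀ k, LodayChain R M D (k + 1) →ₗ[R] LodayChain R M D k
  | 0 => liftAppend (τ 0)
  | k + 1 => liftAppend
      (LinearMap.lcomp R _ (faceSum τ k) ∘ₗ append k + (-1 : R) ^ (k + 1) • τ (k + 1))

theorem faceSum_zero_append (τ : ∀ k, D →ₗ[R] Module.End R (LodayChain R M D k)) (h : D)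
    (x : LodayChain R M D 0) : faceSum τ 0 (append 0 h x) = τ 0 h x :=
  liftAppend_append _ _ _

theorem faceSum_succ_append (τ : ∀ k, D →ₗ[R] Module.End R (LodayChain R M D k)) (k : ℕ) (h : D)
    (x : LodayChain R M D (k + 1)) :
    faceSum τ (k + 1) (append (k + 1) h x)
      = append k h (faceSum τ k x) + (-1 : R) ^ (k + 1) • τ (k + 1) h x :=
  liftAppend_append _ _ _

theorem faceSum_sub (τ τ' : ∀ k, D →ₗ[R] Module.End R (LodayChain R M D k)) :
    ∀ k, faceSum (fun j => τ j - τ' j) k = faceSum τ k - faceSum τ' k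
  | 0 => hom_ext_append fun h x => by
      simp only [LinearMap.sub_apply, faceSum_zero_append]
  | k + 1 => hom_ext_append fun h x => by
      simp only [LinearMap.sub_apply, faceSum_succ_append, faceSum_sub τ τ' k, map_sub, smul_sub]
      abel

/-- The Loday boundary of `CL_*(D, M)`, in which the letters act on the coefficient and on the
preceding letters with opposite signs. -/
noncomputable def boundary (k : ℕ) : LodayChain R M D (k + 1) →ₗ[R] LodayChain R M D k :=
  faceSum (totalAct ρ β) k

/-- The part of the Loday boundary, up to sign, in which a letter acts on the coefficient. -/
noncomputable def coefBoundary (k : ℕ) : LodayChain R M D (k + 1) →ₗ[R] LodayChain R M D k :=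
  faceSum (coefAct ρ) k

theorem coefBoundary_tprod (k : ℕ) (v : M) (hs : Fin (k + 1) → D) :
    coefBoundary ρ k (v ⊗ₜ[R] tprod R hs)
      = ∑ j : Fin (k + 1), (-1 : R) ^ (j : ℕ) •
          (ρ v (hs j) ⊗ₜ[R] tprod R fun t => hs (j.succAbove t)) := by
  induction k with
  | zero =>
    cases hs using Fin.snocCases with | snoc f h
    rw [← append_tprod, coefBoundary, faceSum_zero_append, coefAct_tmul, Fin.sum_univ_castSucc]
    simp only [Finset.univ_eq_empty, Finset.sum_empty, zero_add, Fin.snoc_last,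
      Fin.succAbove_last, Fin.snoc_castSucc, Fin.val_last, pow_zero, one_smul]
  | succ k ih =>
    cases hs using Fin.snocCases with | snoc f h
    rw [← append_tprod, coefBoundary, faceSum_succ_append, coefAct_tmul, ← coefBoundary, ih,
      Fin.sum_univ_castSucc (n := k + 1)]
    simp only [map_sum, map_smul, append_tprod, Fin.snoc_castSucc, Fin.snoc_last,
      snoc_comp_succAbove_castSucc, Fin.succAbove_last, Fin.val_castSucc, Fin.val_last]

theorem faceSum_letterAct_tprod (k : ℕ) (v : M) (hs : Fin (k + 1) → D) :
    faceSum (letterAct β) k (v ⊗ₜ[R] tprod R hs)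
      = ∑ j : Fin (k + 1), ∑ i with i < j, (-1 : R) ^ (j : ℕ) •
          (v ⊗ₜ[R] tprod R fun t => Function.update hs i (β (hs i) (hs j)) (j.succAbove t)) := by
  induction k with
  | zero =>
    cases hs using Fin.snocCases with | snoc f h
    rw [← append_tprod, faceSum_zero_append, letterAct_tprod]
    simp [Finset.filter_false_of_mem]
  | succ k ih =>
    cases hs using Fin.snocCases with | snoc f h
    rw [← append_tprod, faceSum_succ_append, letterAct_tprod, ih,
      Fin.sum_univ_castSucc (n := k + 1)]
    simp only [Finset.sum_filter, Finset.smul_sum, Fin.sum_univ_castSucc (n := k + 1), map_sum,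
      map_smul, apply_ite (append k h), map_zero, append_tprod, Fin.snoc_castSucc, Fin.snoc_last,
      ← Fin.snoc_update, Fin.castSucc_lt_castSucc_iff, Fin.castSucc_lt_last,
      not_lt_of_gt (Fin.castSucc_lt_last _), lt_irrefl, if_true, if_false, add_zero,
      snoc_comp_succAbove_castSucc, Fin.succAbove_last, Fin.val_castSucc, Fin.val_last]

theorem boundary_tprod (k : ℕ) (v : M) (hs : Fin (k + 1) → D) :
    boundary ρ β k (v ⊗ₜ[R] tprod R hs)
      = (∑ j : Fin (k + 1), (-1 : R) ^ ((j : ℕ) + 1) •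
          (ρ v (hs j) ⊗ₜ[R] tprod R fun t => hs (j.succAbove t)))
        + ∑ j : Fin (k + 1), ∑ i with i < j, (-1 : R) ^ (j : ℕ) •
          (v ⊗ₜ[R] tprod R fun t => Function.update hs i (β (hs i) (hs j)) (j.succAbove t)) := by
  have boundary_eq : boundary ρ β k = faceSum (letterAct β) k - coefBoundary ρ k :=
    faceSum_sub _ _ k
  rw [boundary_eq, LinearMap.sub_apply, faceSum_letterAct_tprod, coefBoundary_tprod]
  simp only [pow_succ, mul_neg_one, neg_smul, Finset.sum_neg_distrib]
  abel

end Boundary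

section MapLetters

variable {R M D D' : Type*} [CommRing R] [AddCommGroup M] [Module R M] [AddCommGroup D] [Module R D]
  [AddCommGroup D'] [Module R D']

/-- The chain map induced by a linear map of the letters. -/
noncomputable def mapLetters (f : D →ₗ[R] D') (k : ℕ) :
    LodayChain R M D k →ₗ[R] LodayChain R M D' k :=
  LinearMap.lTensor M (PiTensorProduct.map fun _ => f)

theorem mapLetters_tprod (f : D →ₗ[R] D') (k : ℕ) (v : M) (hs : Fin k → D) :
    mapLetters f k (v ⊗ₜ[R] tprod R hs) = v ⊗ₜ[R] tprod R fun i => f (hs i) := by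
  simp [mapLetters]

theorem mapLetters_append (f : D →ₗ[R] D') (k : ℕ) (h : D) (x : LodayChain R M D k) :
    mapLetters f (k + 1) (append k h x) = append k (f h) (mapLetters f k x) := by
  suffices mapLetters f (k + 1) ∘ₗ append k h = append k (f h) ∘ₗ mapLetters f k from
    LinearMap.congr_fun this x
  refine hom_ext fun v hs => ?_
  simp only [LinearMap.comp_apply, append_tprod, mapLetters_tprod, ← Function.comp_def f,
    Fin.comp_snoc]

theorem mapLetters_mapLetters {D'' : Type*} [AddCommGroup D''] [Module R D''] (f : D →ₗ[R] D')
    (f' : D' →ₗ[R] D'') (k : ℕ) (x : LodayChain R M D k) :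
    mapLetters f' k (mapLetters f k x) = mapLetters (f' ∘ₗ f) k x := by
  simp only [mapLetters, PiTensorProduct.map_comp, LinearMap.lTensor_comp_apply]

theorem mapLetters_id (k : ℕ) (x : LodayChain R M D k) : mapLetters LinearMap.id k x = x := by
  simp [mapLetters]

theorem mapLetters_mapLetters_of_comp_eq_id {f : D →ₗ[R] D'} {s : D' →ₗ[R] D}
    (hs : f ∘ₗ s = LinearMap.id) (k : ℕ) (y : LodayChain R M D' k) :
    mapLetters f k (mapLetters s k y) = y := by
  rw [mapLetters_mapLetters, hs, mapLetters_id]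

theorem mapLetters_zero (f : D →ₗ[R] D) : mapLetters (M := M) f 0 = LinearMap.id :=
  hom_ext fun v hs => by
    rw [mapLetters_tprod, Subsingleton.elim (fun i => f (hs i)) hs, LinearMap.id_apply]

theorem mapLetters_comp_faceSum {τ : ∀ k, D →ₗ[R] Module.End R (LodayChain R M D k)}
    {τ' : ∀ k, D' →ₗ[R] Module.End R (LodayChain R M D' k)} {f : D →ₗ[R] D'}
    (hτ : ∀ k h x, mapLetters f k (τ k h x) = τ' k (f h) (mapLetters f k x)) (k : ℕ) :
    mapLetters f k ∘ₗ faceSum τ k = faceSum τ' k ∘ₗ mapLetters f (k + 1) := by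
  induction k with
  | zero =>
    refine hom_ext_append fun h x => ?_
    simp only [LinearMap.comp_apply, mapLetters_append, faceSum_zero_append, hτ]
  | succ k ih =>
    refine hom_ext_append fun h x => ?_
    have ih_apply := LinearMap.congr_fun ih x
    simp only [LinearMap.comp_apply] at ih_apply ⊢
    simp only [mapLetters_append, faceSum_succ_append, map_add, map_smul, hτ, ih_apply]

theorem mapLetters_coefAct {ρ : M →ₗ[R] D →ₗ[R] M} {ρ' : M →ₗ[R] D' →ₗ[R] M} {f : D →ₗ[R] D'}
    (hρ : ∀ v h, ρ v h = ρ' v (f h)) (k : ℕ) (h : D) (x : LodayChain R M D k) :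
    mapLetters f k (coefAct ρ k h x) = coefAct ρ' k (f h) (mapLetters f k x) := by
  suffices mapLetters f k ∘ₗ coefAct ρ k h = coefAct ρ' k (f h) ∘ₗ mapLetters f k from
    LinearMap.congr_fun this x
  refine hom_ext fun v hs => ?_
  simp only [LinearMap.comp_apply, coefAct_tmul, mapLetters_tprod, hρ]

theorem mapLetters_letterAct {β : D →ₗ[R] D →ₗ[R] D} {β' : D' →ₗ[R] D' →ₗ[R] D'} {f : D →ₗ[R] D'}
    (hβ : ∀ x h, f (β x h) = β' (f x) (f h)) (k : ℕ) (h : D) (x : LodayChain R M D k) :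
    mapLetters f k (letterAct β k h x) = letterAct β' k (f h) (mapLetters f k x) := by
  suffices mapLetters f k ∘ₗ letterAct β k h = letterAct β' k (f h) ∘ₗ mapLetters f k from
    LinearMap.congr_fun this x
  refine hom_ext fun v hs => ?_
  simp only [LinearMap.comp_apply, letterAct_tprod, mapLetters_tprod, map_sum, ← hβ]
  simp only [← Function.comp_def f, Function.comp_update]

theorem mapLetters_coefBoundary {ρ : M →ₗ[R] D →ₗ[R] M} {ρ' : M →ₗ[R] D' →ₗ[R] M} {f : D →ₗ[R] D'}
    (hρ : ∀ v h, ρ v h = ρ' v (f h)) (k : ℕ) (x : LodayChain R M D (k + 1)) :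
    mapLetters f k (coefBoundary ρ k x) = coefBoundary ρ' k (mapLetters f (k + 1) x) :=
  LinearMap.congr_fun (mapLetters_comp_faceSum (mapLetters_coefAct hρ) k) x

theorem mapLetters_boundary {ρ : M →ₗ[R] D →ₗ[R] M} {ρ' : M →ₗ[R] D' →ₗ[R] M}
    {β : D →ₗ[R] D →ₗ[R] D} {β' : D' →ₗ[R] D' →ₗ[R] D'} {f : D →ₗ[R] D'}
    (hρ : ∀ v h, ρ v h = ρ' v (f h)) (hβ : ∀ x h, f (β x h) = β' (f x) (f h)) (k : ℕ)
    (x : LodayChain R M D (k + 1)) :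
    mapLetters f k (boundary ρ β k x) = boundary ρ' β' k (mapLetters f (k + 1) x) :=
  have hτ (k : ℕ) (h : D) (x : LodayChain R M D k) :
      mapLetters f k (totalAct ρ β k h x) = totalAct ρ' β' k (f h) (mapLetters f k x) := by
    simp only [totalAct, LinearMap.sub_apply, map_sub, mapLetters_letterAct hβ,
      mapLetters_coefAct hρ]
  LinearMap.congr_fun (mapLetters_comp_faceSum hτ k) x

end MapLetters

section Curvature

variable {R M D : Type*} [CommRing R] [AddCommGroup M] [Module R M] [AddCommGroup D] [Module R D]

/-- The bracket `β` makes `D` a (right) Leibniz algebra and `ρ` makes `M` a right module over it.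
Only the right half of a co-representation enters the Loday boundary. -/
structure IsLeibnizModule (ρ : M →ₗ[R] D →ₗ[R] M) (β : D →ₗ[R] D →ₗ[R] D) : Prop where
  act_bracket (v : M) (a b : D) : ρ v (β a b) = ρ (ρ v a) b - ρ (ρ v b) a
  bracket_bracket (x a b : D) : β x (β a b) = β (β x a) b - β (β x b) a

theorem commute_letterAct_coefAct (ρ : M →ₗ[R] D →ₗ[R] M) (β : D →ₗ[R] D →ₗ[R] D) (k : ℕ)
    (a b : D) : Commute (letterAct β k a) (coefAct ρ k b) :=
  (LinearMap.lTensor_comp_rTensor ..).trans (LinearMap.rTensor_comp_lTensor ..).symm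

variable {ρ : M →ₗ[R] D →ₗ[R] M} {β : D →ₗ[R] D →ₗ[R] D}

namespace IsLeibnizModule

variable (hL : IsLeibnizModule ρ β)
include hL

theorem coefAct_bracket (k : ℕ) (a b : D) :
    coefAct ρ k (β a b) = coefAct ρ k b * coefAct ρ k a - coefAct ρ k a * coefAct ρ k b :=
  hom_ext fun v hs => by
    simp only [LinearMap.sub_apply, Module.End.mul_apply, coefAct_tmul, hL.act_bracket,
      TensorProduct.sub_tmul]

theorem letterAct_bracket (k : ℕ) (a b : D) :
    letterAct (M := M) β k (β a b)
      = letterAct β k b * letterAct β k a - letterAct β k a * letterAct β k b := by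
  have flip_bracket : β.flip (β a b) =
      (β.flip b * β.flip a - β.flip a * β.flip b : Module.End R D) :=
    LinearMap.ext fun x => hL.bracket_bracket x a b
  simp only [letterAct, LinearMap.comp_apply, flip_bracket]
  rw [tensorDerivation_commutator, map_sub]
  exact congrArg₂ (· - ·) (LinearMap.lTensor_mul ..) (LinearMap.lTensor_mul ..)

theorem totalAct_curvature (k : ℕ) (a b : D) :
    totalAct ρ β k b * totalAct ρ β k a - totalAct ρ β k a * totalAct ρ β k b
        - totalAct ρ β k (β a b)
      = (2 : R) • (coefAct ρ k b * coefAct ρ k a - coefAct ρ k a * coefAct ρ k b) := by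
  simp only [totalAct, LinearMap.sub_apply, hL.letterAct_bracket, hL.coefAct_bracket, sub_mul,
    mul_sub, (commute_letterAct_coefAct ρ β k _ _).eq, two_smul]
  abel

theorem totalAct_boundary (k : ℕ) (h : D) :
    totalAct ρ β k h ∘ₗ boundary ρ β k - boundary ρ β k ∘ₗ totalAct ρ β (k + 1) h
      = (2 : R) •
          (coefAct ρ k h ∘ₗ coefBoundary ρ k - coefBoundary ρ k ∘ₗ coefAct ρ (k + 1) h) := by
  induction k with
  | zero =>
    refine hom_ext_append fun l x => ?_
    have curvature := LinearMap.congr_fun (hL.totalAct_curvature 0 l h) x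
    simp only [LinearMap.sub_apply, LinearMap.smul_apply, LinearMap.comp_apply,
      Module.End.mul_apply, boundary, coefBoundary, totalAct_append, coefAct_append, map_add,
      faceSum_zero_append] at curvature ⊢
    rw [← curvature]
    abel
  | succ k ih =>
    refine hom_ext_append fun l x => ?_
    have curvature := LinearMap.congr_fun (hL.totalAct_curvature (k + 1) l h) x
    have ih_apply := congrArg (append k l) (LinearMap.congr_fun ih x)
    simp only [LinearMap.sub_apply, LinearMap.smul_apply, LinearMap.comp_apply,
      Module.End.mul_apply, boundary, coefBoundary, totalAct_append, coefAct_append, map_add,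
      map_sub, map_smul, faceSum_succ_append] at curvature ih_apply ⊢
    linear_combination (norm := module) ih_apply + (-1 : R) ^ (k + 1) • curvature

/-- The square need not vanish because `totalAct` is not an action of the Leibniz algebra. -/
theorem boundary_comp_boundary (k : ℕ) :
    boundary ρ β k ∘ₗ boundary ρ β (k + 1)
      = (2 : R) • (coefBoundary ρ k ∘ₗ coefBoundary ρ (k + 1)) := by
  induction k with
  | zero =>
    refine hom_ext_append fun h x => ?_
    have act_boundary := LinearMap.congr_fun (hL.totalAct_boundary 0 h) x
    simp only [LinearMap.sub_apply, LinearMap.smul_apply, LinearMap.comp_apply, boundary,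
      coefBoundary, map_add, map_smul, faceSum_zero_append, faceSum_succ_append] at act_boundary ⊢
    linear_combination (norm := module) act_boundary
  | succ k ih =>
    refine hom_ext_append fun h x => ?_
    have act_boundary := LinearMap.congr_fun (hL.totalAct_boundary (k + 1) h) x
    have ih_apply := congrArg (append k h) (LinearMap.congr_fun ih x)
    simp only [LinearMap.sub_apply, LinearMap.smul_apply, LinearMap.comp_apply, boundary,
      coefBoundary, map_add, map_smul, faceSum_succ_append] at act_boundary ih_apply ⊢
    linear_combination (norm := module) ih_apply + (-1 : R) ^ (k + 1) • act_boundary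

theorem boundary_boundary (k : ℕ) (x : LodayChain R M D (k + 2)) :
    boundary ρ β k (boundary ρ β (k + 1) x)
      = (2 : R) • coefBoundary ρ k (coefBoundary ρ (k + 1) x) :=
  LinearMap.congr_fun (hL.boundary_comp_boundary k) x

end IsLeibnizModule

/-- Insertion of a last letter, corrected by the insertion of the same first letter: the correction
makes it commute with `coefBoundary`, hence with the square of the boundary. -/
noncomputable def twistedAppend (k : ℕ) :
    D →ₗ[R] LodayChain R M D k →ₗ[R] LodayChain R M D (k + 1) :=
  append k + (-1 : R) ^ (k + 1) • prepend k

theorem twistedAppend_apply (k : ℕ) (l : D) (x : LodayChain R M D k) :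
    twistedAppend k l x = append k l x + (-1 : R) ^ (k + 1) • prepend k l x :=
  rfl

theorem coefBoundary_comp_prepend (k : ℕ) (l : D) :
    coefBoundary ρ (k + 1) ∘ₗ prepend (k + 1) l
      = coefAct ρ (k + 1) l - prepend k l ∘ₗ coefBoundary ρ k := by
  induction k with
  | zero =>
    refine hom_ext_append fun h x => ?_
    simp only [LinearMap.comp_apply, LinearMap.sub_apply, coefBoundary, prepend_append,
      prepend_zero, faceSum_zero_append, faceSum_succ_append, coefAct_append]
    module
  | succ k ih =>
    refine hom_ext_append fun h x => ?_
    have ih_apply := congrArg (append (k + 1) h) (LinearMap.congr_fun ih x)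
    simp only [LinearMap.comp_apply, LinearMap.sub_apply, coefBoundary, prepend_append, map_add,
      map_sub, map_smul, faceSum_succ_append, coefAct_append, coefAct_prepend] at ih_apply ⊢
    linear_combination (norm := module) ih_apply

theorem coefBoundary_twistedAppend (k : ℕ) (l : D) (x : LodayChain R M D (k + 1)) :
    coefBoundary ρ (k + 1) (twistedAppend (k + 1) l x)
      = twistedAppend k l (coefBoundary ρ k x) := by
  have boundary_append : coefBoundary ρ (k + 1) (append (k + 1) l x)
      = append k l (coefBoundary ρ k x) + (-1 : R) ^ (k + 1) • coefAct ρ (k + 1) l x :=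
    faceSum_succ_append _ k l x
  have boundary_prepend := LinearMap.congr_fun (coefBoundary_comp_prepend (ρ := ρ) k l) x
  simp only [LinearMap.comp_apply, LinearMap.sub_apply] at boundary_prepend
  rw [twistedAppend_apply, map_add, map_smul, boundary_append, boundary_prepend,
    twistedAppend_apply]
  module

theorem IsLeibnizModule.boundary_boundary_twistedAppend (hL : IsLeibnizModule ρ β) (k : ℕ) (l : D)
    (x : LodayChain R M D (k + 2)) :
    boundary ρ β (k + 1) (boundary ρ β (k + 2) (twistedAppend (k + 2) l x))
      = twistedAppend k l (boundary ρ β k (boundary ρ β (k + 1) x)) := by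
  simp only [hL.boundary_boundary, coefBoundary_twistedAppend, map_smul]

end Curvature

section TailProj

variable {R M D : Type*} [CommRing R] [AddCommGroup M] [Module R M] [AddCommGroup D] [Module R D]

/-- The map acting by `f` on the last letter of a chain and by `φ` on the rest. -/
noncomputable def mapLast {j k : ℕ} (f : D →ₗ[R] D)
    (φ : LodayChain R M D k →ₗ[R] LodayChain R M D j) :
    LodayChain R M D (k + 1) →ₗ[R] LodayChain R M D (j + 1) :=
  liftAppend ((append j).compl₁₂ f φ)

@[simp]
theorem mapLast_append {j k : ℕ} (f : D →ₗ[R] D) (φ : LodayChain R M D k →ₗ[R] LodayChain R M D j)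
    (h : D) (x : LodayChain R M D k) : mapLast f φ (append k h x) = append j (f h) (φ x) :=
  liftAppend_append _ _ _

/-- The linear map `p` applied to the last `t` letters of a chain. When `p` is idempotent, the
kernel of `tailProj p t k` is spanned by the chains one of whose last `t` letters lies in the kernel
of `p`; these kernels form the filtration of the comparison argument. -/
noncomputable def tailProj (p : D →ₗ[R] D) :
    ∀ _t k : ℕ, LodayChain R M D k →ₗ[R] LodayChain R M D k
  | 0, _ => LinearMap.id
  | _ + 1, 0 => LinearMap.id
  | t + 1, k + 1 => mapLast p (tailProj p t k)

variable {p : D →ₗ[R] D}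

theorem tailProj_zero (k : ℕ) (x : LodayChain R M D k) : tailProj p 0 k x = x := by
  rw [tailProj, LinearMap.id_apply]

theorem tailProj_degree_zero (t : ℕ) (x : LodayChain R M D 0) : tailProj p t 0 x = x := by
  cases t <;> rw [tailProj, LinearMap.id_apply]

theorem tailProj_succ_append (t k : ℕ) (h : D) (x : LodayChain R M D k) :
    tailProj p (t + 1) (k + 1) (append k h x) = append k (p h) (tailProj p t k x) :=
  mapLast_append _ _ _ _

theorem tailProj_self (k : ℕ) : tailProj p k k = mapLetters (M := M) p k := by
  induction k with
  | zero => exact (mapLetters_zero p).symm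
  | succ k ih =>
    refine hom_ext_append fun h x => ?_
    rw [tailProj_succ_append, ih, mapLetters_append]

variable (p) in
/-- A linear idempotent `p` of `D` whose kernel acts trivially on `M` and from the right on `D`, and
is a right ideal for the bracket. -/
structure IsNullProjection (ρ : M →ₗ[R] D →ₗ[R] M) (β : D →ₗ[R] D →ₗ[R] D) : Prop where
  proj_proj (h : D) : p (p h) = p h
  act_proj (v : M) (h : D) : ρ v (p h) = ρ v h
  bracket_proj (x h : D) : β x (p h) = β x h
  proj_bracket_proj (x h : D) : p (β (p x) h) = p (β x h)

namespace IsNullProjection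

variable {ρ : M →ₗ[R] D →ₗ[R] M} {β : D →ₗ[R] D →ₗ[R] D} (hp : IsNullProjection p ρ β)
include hp

theorem proj_sub_proj (h : D) : p (h - p h) = 0 := by
  rw [map_sub, hp.proj_proj, sub_self]

theorem totalAct_proj (k : ℕ) (h : D) : totalAct ρ β k (p h) = totalAct ρ β k h :=
  hom_ext fun v hs => by
    simp only [totalAct, LinearMap.sub_apply, coefAct_tmul, letterAct_tprod, hp.act_proj,
      hp.bracket_proj]

theorem totalAct_eq_zero (k : ℕ) {i : D} (hi : p i = 0) : totalAct ρ β k i = 0 := by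
  rw [← hp.totalAct_proj, hi, map_zero]

theorem boundary_append_of_proj_eq_zero (k : ℕ) {i : D} (hi : p i = 0)
    (x : LodayChain R M D (k + 1)) :
    boundary ρ β (k + 1) (append (k + 1) i x) = append k i (boundary ρ β k x) := by
  rw [boundary, faceSum_succ_append, hp.totalAct_eq_zero _ hi, LinearMap.zero_apply, smul_zero,
    add_zero, boundary]

theorem tailProj_tailProj (t k : ℕ) (x : LodayChain R M D k) :
    tailProj p t k (tailProj p t k x) = tailProj p t k x := by
  suffices tailProj p t k ∘ₗ tailProj p t k = tailProj p t k from LinearMap.congr_fun this x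
  clear x
  induction k generalizing t with
  | zero => exact LinearMap.ext fun x => by simp only [LinearMap.comp_apply, tailProj_degree_zero]
  | succ k ih =>
    cases t with
    | zero => exact LinearMap.ext fun x => by simp only [LinearMap.comp_apply, tailProj_zero]
    | succ t =>
      refine hom_ext_append fun h x => ?_
      have ih_apply := LinearMap.congr_fun (ih t) x
      rw [LinearMap.comp_apply] at ih_apply ⊢
      rw [tailProj_succ_append, tailProj_succ_append, hp.proj_proj, ih_apply]

theorem tailProj_succ_tailProj (t k : ℕ) (x : LodayChain R M D k) :
    tailProj p (t + 1) k (tailProj p t k x) = tailProj p (t + 1) k x := by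
  suffices tailProj p (t + 1) k ∘ₗ tailProj p t k = tailProj p (t + 1) k from
    LinearMap.congr_fun this x
  clear x
  induction k generalizing t with
  | zero => exact LinearMap.ext fun x => by simp only [LinearMap.comp_apply, tailProj_degree_zero]
  | succ k ih =>
    cases t with
    | zero => exact LinearMap.ext fun x => by simp only [LinearMap.comp_apply, tailProj_zero]
    | succ t =>
      refine hom_ext_append fun h x => ?_
      have ih_apply := LinearMap.congr_fun (ih t) x
      rw [LinearMap.comp_apply] at ih_apply ⊢
      rw [tailProj_succ_append, tailProj_succ_append, tailProj_succ_append, hp.proj_proj, ih_apply]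

theorem tailProj_totalAct_tailProj (t k : ℕ) (h : D) (x : LodayChain R M D k) :
    tailProj p t k (totalAct ρ β k h (tailProj p t k x)) = tailProj p t k (totalAct ρ β k h x) := by
  suffices tailProj p t k ∘ₗ totalAct ρ β k h ∘ₗ tailProj p t k
      = tailProj p t k ∘ₗ totalAct ρ β k h from LinearMap.congr_fun this x
  clear x
  induction k generalizing t with
  | zero => exact LinearMap.ext fun x => by simp only [LinearMap.comp_apply, tailProj_degree_zero]
  | succ k ih =>
    cases t with
    | zero => exact LinearMap.ext fun x => by simp only [LinearMap.comp_apply, tailProj_zero]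
    | succ t =>
      refine hom_ext_append fun l x => ?_
      have ih_apply := LinearMap.congr_fun (ih t) x
      simp only [LinearMap.comp_apply] at ih_apply ⊢
      simp only [tailProj_succ_append, totalAct_append, map_add, hp.proj_proj,
        hp.proj_bracket_proj, hp.tailProj_tailProj, ih_apply]

theorem tailProj_prepend_tailProj (t k : ℕ) (l : D) (x : LodayChain R M D k) :
    tailProj p t (k + 1) (prepend k l (tailProj p t k x))
      = tailProj p t (k + 1) (prepend k l x) := by
  suffices tailProj p t (k + 1) ∘ₗ prepend k l ∘ₗ tailProj p t k
      = tailProj p t (k + 1) ∘ₗ prepend k l from LinearMap.congr_fun this x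
  clear x
  induction k generalizing t with
  | zero => exact LinearMap.ext fun x => by simp only [LinearMap.comp_apply, tailProj_degree_zero]
  | succ k ih =>
    cases t with
    | zero => exact LinearMap.ext fun x => by simp only [LinearMap.comp_apply, tailProj_zero]
    | succ t =>
      refine hom_ext_append fun h x => ?_
      have ih_apply := LinearMap.congr_fun (ih t) x
      simp only [LinearMap.comp_apply] at ih_apply ⊢
      simp only [tailProj_succ_append, prepend_append, hp.proj_proj, ih_apply]

theorem tailProj_boundary_tailProj (t k : ℕ) (x : LodayChain R M D (k + 1)) :
    tailProj p t k (boundary ρ β k (tailProj p t (k + 1) x))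
      = tailProj p t k (boundary ρ β k x) := by
  suffices tailProj p t k ∘ₗ boundary ρ β k ∘ₗ tailProj p t (k + 1)
      = tailProj p t k ∘ₗ boundary ρ β k from LinearMap.congr_fun this x
  clear x
  cases t with
  | zero => exact LinearMap.ext fun x => by simp only [LinearMap.comp_apply, tailProj_zero]
  | succ t =>
    induction k generalizing t with
    | zero =>
      refine hom_ext_append fun h x => ?_
      simp only [LinearMap.comp_apply, tailProj_succ_append, tailProj_degree_zero, boundary,
        faceSum_zero_append, hp.totalAct_proj]
    | succ k ih =>
      refine hom_ext_append fun h x => ?_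
      have tail_act : tailProj p (t + 1) (k + 1) (totalAct ρ β (k + 1) h (tailProj p t (k + 1) x))
          = tailProj p (t + 1) (k + 1) (totalAct ρ β (k + 1) h x) := by
        rw [← hp.tailProj_succ_tailProj, hp.tailProj_totalAct_tailProj, hp.tailProj_succ_tailProj]
      have ih_apply : tailProj p t k (faceSum (totalAct ρ β) k (tailProj p t (k + 1) x))
          = tailProj p t k (faceSum (totalAct ρ β) k x) := by
        cases t with
        | zero => simp only [tailProj_zero]
        | succ t => exact LinearMap.congr_fun (ih t) x
      simp only [LinearMap.comp_apply, tailProj_succ_append, boundary, faceSum_succ_append,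
        map_add, map_smul, hp.totalAct_proj, hp.proj_proj, tail_act, ih_apply]

end IsNullProjection
end TailProj

section TailHomotopy

variable {R M D : Type*} [CommRing R] [AddCommGroup M] [Module R M] [AddCommGroup D] [Module R D]
  {p : D →ₗ[R] D} {ρ : M →ₗ[R] D →ₗ[R] M} {β : D →ₗ[R] D →ₗ[R] D}

theorem IsNullProjection.eq_zero_of_tailProj_eq_zero {X : Type*} [AddCommGroup X] [Module R X]
    (hp : IsNullProjection p ρ β) {t k : ℕ} {f : LodayChain R M D (k + 1) →ₗ[R] X}
    (hf_letter : ∀ i x, p i = 0 → f (append k i x) = 0)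
    (hf_tail : ∀ h x, tailProj p t k x = 0 → f (append k h x) = 0) {x : LodayChain R M D (k + 1)}
    (hx : tailProj p (t + 1) (k + 1) x = 0) : f x = 0 := by
  suffices f = f ∘ₗ tailProj p (t + 1) (k + 1) by
    rw [this, LinearMap.comp_apply, hx, map_zero]
  refine hom_ext_append fun h x => ?_
  have letter := hf_letter (h - p h) x (hp.proj_sub_proj h)
  have tail := hf_tail (p h) (x - tailProj p t k x)
    (by rw [map_sub, hp.tailProj_tailProj, sub_self])
  rw [map_sub, LinearMap.sub_apply, map_sub, sub_eq_zero] at letter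
  rw [map_sub, map_sub, sub_eq_zero] at tail
  rw [LinearMap.comp_apply, tailProj_succ_append, letter, tail]

/-- `H` and `G` contract the `b`-th quotient of the filtration by the kernels of the `tailProj p t`
on the chains of degree `k + 1`. -/
structure TailHomotopy (p : D →ₗ[R] D) (ρ : M →ₗ[R] D →ₗ[R] M) (β : D →ₗ[R] D →ₗ[R] D) (b k : ℕ)
    (H : LodayChain R M D (k + 1) →ₗ[R] LodayChain R M D (k + 2))
    (G : LodayChain R M D k →ₗ[R] LodayChain R M D (k + 1)) : Prop where
  tailProj_H (x : LodayChain R M D (k + 1)) : tailProj p (b + 1) (k + 2) (H x) = 0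
  boundary_boundary_H (x : LodayChain R M D (k + 1)) :
    boundary ρ β k (boundary ρ β (k + 1) (H x)) = 0
  G_tailProj (x : LodayChain R M D k) : G (tailProj p b k x) = G x
  tailProj_homotopy {x : LodayChain R M D (k + 1)} (hx : tailProj p (b + 1) (k + 1) x = 0) :
    tailProj p b (k + 1) (boundary ρ β (k + 1) (H x) + G (boundary ρ β k x))
      = tailProj p b (k + 1) x

namespace IsNullProjection

variable (hp : IsNullProjection p ρ β)
include hp

theorem tailHomotopy_zero {k : ℕ} (h G : LodayChain R M D k →ₗ[R] LodayChain R M D (k + 1))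
    (boundary_append_boundary : ∀ i x, p i = 0 →
      boundary ρ β k (append k i (boundary ρ β k (h x))) = 0)
    (homotopy : ∀ i x, p i = 0 →
      append k i (boundary ρ β k (h x)) + G (boundary ρ β k (append k i x)) = append k i x) :
    TailHomotopy p ρ β 0 k (mapLast (LinearMap.id - p) h) G := by
  set H := mapLast (LinearMap.id - p) h
  have H_append (l x) : H (append k l x) = append (k + 1) (l - p l) (h x) := mapLast_append _ _ _ _
  have boundary_H (l x) :
      boundary ρ β (k + 1) (H (append k l x)) = append k (l - p l) (boundary ρ β k (h x)) := by
    rw [H_append, hp.boundary_append_of_proj_eq_zero _ (hp.proj_sub_proj l)]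
  refine ⟨?_, ?_, fun x => by rw [tailProj_zero], fun {x} hx => ?_⟩
  · refine LinearMap.congr_fun (g := 0) (f := tailProj p 1 (k + 2) ∘ₗ H)
      (hom_ext_append fun l x => ?_)
    rw [LinearMap.comp_apply, H_append, tailProj_succ_append, hp.proj_sub_proj, map_zero,
      LinearMap.zero_apply, LinearMap.zero_apply]
  · refine LinearMap.congr_fun (g := 0) (f := boundary ρ β k ∘ₗ boundary ρ β (k + 1) ∘ₗ H)
      (hom_ext_append fun l x => ?_)
    rw [LinearMap.comp_apply, LinearMap.comp_apply, boundary_H,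
      boundary_append_boundary _ _ (hp.proj_sub_proj l), LinearMap.zero_apply]
  · rw [tailProj_zero, tailProj_zero]
    refine sub_eq_zero.1 (hp.eq_zero_of_tailProj_eq_zero
      (f := boundary ρ β (k + 1) ∘ₗ H + G ∘ₗ boundary ρ β k - LinearMap.id)
      (fun i x hi => ?_) (fun l x hx => ?_) hx)
    · rw [LinearMap.sub_apply, LinearMap.add_apply, LinearMap.comp_apply, LinearMap.comp_apply,
        boundary_H, hi, sub_zero, homotopy i x hi, LinearMap.id_apply, sub_self]
    · rw [tailProj_zero] at hx
      rw [hx, map_zero, map_zero]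

theorem tailProj_twistedAppend_eq_zero {t k : ℕ} (l : D) {x : LodayChain R M D k}
    (hx : tailProj p t k x = 0) : tailProj p (t + 1) (k + 1) (twistedAppend k l x) = 0 := by
  have tail_x : tailProj p (t + 1) k x = 0 := by rw [← hp.tailProj_succ_tailProj, hx, map_zero]
  rw [twistedAppend_apply, map_add, map_smul, tailProj_succ_append, hx,
    ← hp.tailProj_prepend_tailProj, tail_x]
  simp only [map_zero, smul_zero, add_zero]

theorem tailProj_boundary_twistedAppend {t k : ℕ} (l : D) {x : LodayChain R M D (k + 1)}
    (hx : tailProj p t (k + 1) x = 0) :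
    tailProj p t (k + 1) (boundary ρ β (k + 1) (twistedAppend (k + 1) l x))
      = tailProj p t (k + 1) (append k l (boundary ρ β k x)) := by
  have tail_act : tailProj p t (k + 1) (totalAct ρ β (k + 1) l x) = 0 := by
    rw [← hp.tailProj_totalAct_tailProj, hx, map_zero, map_zero]
  have tail_prepend : tailProj p t (k + 1) (boundary ρ β (k + 1) (prepend (k + 1) l x)) = 0 := by
    rw [← hp.tailProj_boundary_tailProj, ← hp.tailProj_prepend_tailProj, hx]
    simp only [map_zero]
  rw [twistedAppend_apply, map_add, map_smul, map_add, map_smul, tail_prepend, boundary,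
    faceSum_succ_append, map_add, map_smul, tail_act, smul_zero, smul_zero, add_zero, add_zero,
    ← boundary]

end IsNullProjection

theorem TailHomotopy.succ {b k : ℕ}
    {H : LodayChain R M D (k + 1) →ₗ[R] LodayChain R M D (k + 2)}
    {G : LodayChain R M D k →ₗ[R] LodayChain R M D (k + 1)} (hHG : TailHomotopy p ρ β b k H G)
    (hp : IsNullProjection p ρ β) (hL : IsLeibnizModule ρ β) :
    TailHomotopy p ρ β (b + 1) (k + 1) (liftAppend ((twistedAppend (k + 2)).compl₁₂ p H))
      (mapLast p G) := by
  set H' := liftAppend ((twistedAppend (k + 2)).compl₁₂ p H)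
  have H'_append (l x) : H' (append (k + 1) l x) = twistedAppend (k + 2) (p l) (H x) :=
    liftAppend_append _ _ _
  have G'_tailProj (x) : mapLast p G (tailProj p (b + 1) (k + 1) x) = mapLast p G x := by
    refine LinearMap.congr_fun (f := mapLast p G ∘ₗ tailProj p (b + 1) (k + 1))
      (hom_ext_append fun l x => ?_) x
    rw [LinearMap.comp_apply, tailProj_succ_append, mapLast_append, mapLast_append, hp.proj_proj,
      hHG.G_tailProj]
  refine ⟨?_, ?_, G'_tailProj, fun {x} hx => ?_⟩
  · refine LinearMap.congr_fun (g := 0) (f := tailProj p (b + 2) (k + 3) ∘ₗ H')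
      (hom_ext_append fun l x => ?_)
    rw [LinearMap.comp_apply, H'_append,
      hp.tailProj_twistedAppend_eq_zero (p l) (hHG.tailProj_H x), LinearMap.zero_apply]
  · refine LinearMap.congr_fun (g := 0) (f := boundary ρ β (k + 1) ∘ₗ boundary ρ β (k + 2) ∘ₗ H')
      (hom_ext_append fun l x => ?_)
    rw [LinearMap.comp_apply, LinearMap.comp_apply, H'_append, hL.boundary_boundary_twistedAppend,
      hHG.boundary_boundary_H, map_zero, LinearMap.zero_apply]
  refine sub_eq_zero.1 (hp.eq_zero_of_tailProj_eq_zero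
    (f := tailProj p (b + 1) (k + 2) ∘ₗ (boundary ρ β (k + 2) ∘ₗ H'
      + mapLast p G ∘ₗ boundary ρ β (k + 1)) - tailProj p (b + 1) (k + 2))
    (fun i x hi => ?_) (fun l x hx => ?_) hx)
  · simp only [LinearMap.sub_apply, LinearMap.comp_apply, LinearMap.add_apply, H'_append, hi,
      hp.boundary_append_of_proj_eq_zero _ hi, mapLast_append, tailProj_succ_append, map_zero,
      LinearMap.zero_apply, add_zero, sub_zero]
  · have boundary_H' : tailProj p (b + 1) (k + 2) (boundary ρ β (k + 2) (H' (append (k + 1) l x)))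
        = append (k + 1) (p l) (tailProj p b (k + 1) (boundary ρ β (k + 1) (H x))) := by
      rw [H'_append, hp.tailProj_boundary_twistedAppend _ (hHG.tailProj_H x),
        tailProj_succ_append, hp.proj_proj]
    have G'_act : mapLast p G (totalAct ρ β (k + 1) l x) = 0 := by
      rw [← G'_tailProj, ← hp.tailProj_totalAct_tailProj, hx]
      simp only [map_zero]
    have G'_boundary : mapLast p G (boundary ρ β (k + 1) (append (k + 1) l x))
        = append (k + 1) (p l) (G (boundary ρ β k x)) := by
      rw [boundary, faceSum_succ_append, map_add, map_smul, G'_act, smul_zero, add_zero,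
        mapLast_append, boundary]
    have homotopy := hHG.tailProj_homotopy hx
    rw [LinearMap.sub_apply, LinearMap.comp_apply, LinearMap.add_apply, LinearMap.comp_apply,
      LinearMap.comp_apply, map_add, boundary_H', G'_boundary, tailProj_succ_append, hp.proj_proj,
      ← map_add, ← map_add, homotopy, tailProj_succ_append, sub_self]

end TailHomotopy

section NullExtension

variable {R M D : Type*} [CommRing R] [AddCommGroup M] [Module R M] [AddCommGroup D] [Module R D]

/-- A surjection `π` of Leibniz algebras, compatible with their right actions on the same module,
whose kernel multiplies to zero from the right. -/
structure IsNullExtension {L : Type*} [AddCommGroup L] [Module R L] (π : D →ₗ[R] L)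
    (ρ : M →ₗ[R] D →ₗ[R] M) (β : D →ₗ[R] D →ₗ[R] D) (ρ' : M →ₗ[R] L →ₗ[R] M)
    (β' : L →ₗ[R] L →ₗ[R] L) : Prop where
  range_eq_top : LinearMap.range π = ⊤
  map_act (v : M) (h : D) : ρ v h = ρ' v (π h)
  map_bracket (x h : D) : π (β x h) = β' (π x) (π h)
  bracket_eq_zero {i : D} (hi : π i = 0) (x : D) : β x i = 0

namespace IsNullExtension

variable {L : Type*} [AddCommGroup L] [Module R L] {π : D →ₗ[R] L} {s : L →ₗ[R] D}
  {ρ : M →ₗ[R] D →ₗ[R] M} {β : D →ₗ[R] D →ₗ[R] D} {ρ' : M →ₗ[R] L →ₗ[R] M}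
  {β' : L →ₗ[R] L →ₗ[R] L} (hπ : IsNullExtension π ρ β ρ' β')
include hπ

theorem isNullProjection (hs : π ∘ₗ s = LinearMap.id) : IsNullProjection (s ∘ₗ π) ρ β := by
  have π_s (l : L) : π (s l) = l := LinearMap.congr_fun hs l
  refine ⟨fun h => ?_, fun v h => ?_, fun x h => ?_, fun x h => ?_⟩ <;>
    simp only [LinearMap.comp_apply]
  · rw [π_s]
  · rw [hπ.map_act, hπ.map_act, π_s]
  · exact sub_eq_zero.1 <| (map_sub _ _ _).symm.trans <|
      hπ.bracket_eq_zero (by rw [map_sub, π_s, sub_self]) x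
  · rw [hπ.map_bracket, hπ.map_bracket, π_s]

theorem boundary_boundary_mapLetters (hs : π ∘ₗ s = LinearMap.id) (hL : IsLeibnizModule ρ β)
    (k : ℕ) (y : LodayChain R M L (k + 2)) :
    boundary ρ β k (boundary ρ β (k + 1) (mapLetters s (k + 2) y))
      = mapLetters s k (boundary ρ' β' k (boundary ρ' β' (k + 1) y)) := by
  have section_act (v : M) (l : L) : ρ' v l = ρ v (s l) := by
    rw [hπ.map_act, show π (s l) = l from LinearMap.congr_fun hs l]
  have coef_square (k : ℕ) (y : LodayChain R M L (k + 2)) :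
      boundary ρ β k (boundary ρ β (k + 1) (mapLetters s (k + 2) y))
        = mapLetters s k ((2 : R) • coefBoundary ρ' k (coefBoundary ρ' (k + 1) y)) := by
    rw [hL.boundary_boundary, ← mapLetters_coefBoundary section_act,
      ← mapLetters_coefBoundary section_act, map_smul]
  have lower_square : boundary ρ' β' k (boundary ρ' β' (k + 1) y)
      = (2 : R) • coefBoundary ρ' k (coefBoundary ρ' (k + 1) y) := by
    rw [← mapLetters_mapLetters_of_comp_eq_id hs (k + 2) y,
      ← mapLetters_boundary hπ.map_act hπ.map_bracket,
      ← mapLetters_boundary hπ.map_act hπ.map_bracket, coef_square,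
      mapLetters_mapLetters_of_comp_eq_id hs, mapLetters_mapLetters_of_comp_eq_id hs]
  rw [coef_square, lower_square]

end IsNullExtension

end NullExtension

section Comparison

variable {K M D : Type*} [Field K] [AddCommGroup M] [Module K M] [AddCommGroup D] [Module K D]
  {p : D →ₗ[K] D} {ρ : M →ₗ[K] D →ₗ[K] M} {β : D →ₗ[K] D →ₗ[K] D}

theorem IsNullProjection.exists_tailHomotopy_zero (hp : IsNullProjection p ρ β) :
    ∀ {k : ℕ}, IsExactAt (boundary ρ β) k → ∃ H G, TailHomotopy p ρ β 0 k H G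
  | 0, h_exact => by
    obtain ⟨h, hh⟩ := (boundary ρ β 0).exists_rightInverse_of_surjective h_exact
    have boundary_h (x) : boundary ρ β 0 (h x) = x := LinearMap.congr_fun hh x
    have boundary_append {i : D} (x) (hi : p i = 0) : boundary ρ β 0 (append 0 i x) = 0 := by
      rw [boundary, faceSum_zero_append, hp.totalAct_eq_zero 0 hi, LinearMap.zero_apply]
    refine ⟨_, 0, hp.tailHomotopy_zero h 0 (fun i x hi => boundary_append _ hi) fun i x _ => ?_⟩
    rw [boundary_h, LinearMap.zero_apply, add_zero]
  | k + 1, h_exact => by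
    obtain ⟨h, r, contraction, boundary_boundary_h⟩ := exists_contraction h_exact
    refine ⟨_, _, hp.tailHomotopy_zero h (mapLast (LinearMap.id - p) r)
      (fun i x hi => ?_) fun i x hi => ?_⟩
    · rw [hp.boundary_append_of_proj_eq_zero k hi, boundary_boundary_h, map_zero]
    · rw [hp.boundary_append_of_proj_eq_zero k hi, mapLast_append, LinearMap.sub_apply, hi,
        sub_zero, LinearMap.id_apply, ← map_add, contraction]

theorem exists_tailHomotopy (hp : IsNullProjection p ρ β) (hL : IsLeibnizModule ρ β) {j : ℕ}
    (h_exact : IsExactAt (boundary ρ β) j) :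
    ∀ b : ℕ, ∃ H G, TailHomotopy p ρ β b (j + b) H G
  | 0 => hp.exists_tailHomotopy_zero h_exact
  | b + 1 => by
    obtain ⟨H, G, hHG⟩ := exists_tailHomotopy hp hL h_exact b
    exact ⟨_, _, hHG.succ hp hL⟩

theorem mem_range_boundary_of_tailProj_eq_zero (hp : IsNullProjection p ρ β)
    (hL : IsLeibnizModule ρ β) {k : ℕ} (h_exact : ∀ j ≤ k, IsExactAt (boundary ρ β) j) {b : ℕ}
    (hb : b ≤ k + 1)
    {x : LodayChain K M D (k + 1)} (hx : tailProj p b (k + 1) x = 0)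
    (boundary_x : boundary ρ β k x = 0) : x ∈ LinearMap.range (boundary ρ β (k + 1)) := by
  induction b generalizing x with
  | zero =>
    rw [tailProj_zero] at hx
    exact hx ▸ zero_mem _
  | succ b ih =>
    obtain ⟨j, rfl⟩ := Nat.exists_eq_add_of_le' (Nat.le_of_succ_le_succ hb)
    obtain ⟨H, G, hHG⟩ := exists_tailHomotopy hp hL (h_exact j (Nat.le_add_right j b)) b
    have homotopy := hHG.tailProj_homotopy hx
    rw [boundary_x, map_zero, add_zero] at homotopy
    have remainder : x - boundary ρ β (j + b + 1) (H x)
        ∈ LinearMap.range (boundary ρ β (j + b + 1)) := by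
      refine ih (Nat.le_of_succ_le hb) ?_ ?_
      · rw [map_sub, homotopy, sub_self]
      · rw [map_sub, boundary_x, hHG.boundary_boundary_H, sub_zero]
    exact (Submodule.sub_mem_iff_left _ (LinearMap.mem_range_self _ _)).1 remainder

theorem IsNullExtension.isExactAt {L : Type*} [AddCommGroup L] [Module K L] {π : D →ₗ[K] L}
    {ρ' : M →ₗ[K] L →ₗ[K] M} {β' : L →ₗ[K] L →ₗ[K] L} (hπ : IsNullExtension π ρ β ρ' β')
    (hL : IsLeibnizModule ρ β) (h_exact : ∀ k, IsExactAt (boundary ρ' β') k) (k : ℕ) :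
    IsExactAt (boundary ρ β) k := by
  obtain ⟨s, hs⟩ := π.exists_rightInverse_of_surjective hπ.range_eq_top
  induction k using Nat.strong_induction_on with | _ k ih
  cases k with
  | zero =>
    refine LinearMap.range_eq_top.2 fun x => ?_
    obtain ⟨y, hy⟩ := LinearMap.range_eq_top.1 (h_exact 0) (mapLetters π 0 x)
    have section_proj (z : LodayChain K M D 0) : mapLetters s 0 (mapLetters π 0 z) = z := by
      rw [mapLetters_mapLetters, mapLetters_zero, LinearMap.id_apply]
    refine ⟨mapLetters s 1 y, ?_⟩
    rw [← section_proj (boundary ρ β 0 _), mapLetters_boundary hπ.map_act hπ.map_bracket,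
      mapLetters_mapLetters_of_comp_eq_id hs, hy, section_proj]
  | succ k =>
    intro x boundary_x
    rw [LinearMap.mem_ker] at boundary_x
    obtain ⟨y, hy⟩ : mapLetters π (k + 1) x ∈ LinearMap.range (boundary ρ' β' (k + 1)) := by
      apply h_exact (k + 1)
      rw [LinearMap.mem_ker, ← mapLetters_boundary hπ.map_act hπ.map_bracket, boundary_x, map_zero]
    have boundary_boundary_y : boundary ρ' β' k (boundary ρ' β' (k + 1) y) = 0 := by
      rw [hy, ← mapLetters_boundary hπ.map_act hπ.map_bracket, boundary_x, map_zero]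
    have remainder : x - boundary ρ β (k + 1) (mapLetters s (k + 2) y)
        ∈ LinearMap.range (boundary ρ β (k + 1)) := by
      refine mem_range_boundary_of_tailProj_eq_zero (hπ.isNullProjection hs) hL
        (fun j hj => ih j (Nat.lt_succ_of_le hj)) le_rfl ?_ ?_
      · rw [tailProj_self, ← mapLetters_mapLetters, map_sub,
          mapLetters_boundary hπ.map_act hπ.map_bracket, mapLetters_mapLetters_of_comp_eq_id hs, hy,
          sub_self, map_zero]
      · rw [map_sub, boundary_x, hπ.boundary_boundary_mapLetters hs hL, boundary_boundary_y,
          map_zero, sub_zero]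
    exact (Submodule.sub_mem_iff_left _ (LinearMap.mem_range_self _ _)).1 remainder

end Comparison

end LodayChain

section TensorPower

variable {R V : Type*} [CommRing R] [AddCommGroup V] [Module R V] {m : ℕ}
  {br : MultilinearMap R (fun _ : Fin (m + 1) => V) V} {ρ : V →ₗ[R] (⨂[R]^m V) →ₗ[R] V}
  {β : (⨂[R]^m V) →ₗ[R] (⨂[R]^m V) →ₗ[R] (⨂[R]^m V)}

variable (br) in
/-- The fundamental identity of Leibniz `(m + 1)`-algebras. -/
def FundamentalIdentity : Prop :=
  ∀ (x : Fin (m + 1) → V) (y : Fin m → V),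
    br (Fin.cons (br x) y) = ∑ i, br (Function.update x i (br (Fin.cons (x i) y)))

theorem flip_eq_tensorDerivation_flip
    (act_tprod : ∀ x (a : Fin m → V), ρ x (tprod R a) = br (Fin.cons x a))
    (bracket_tprod : ∀ a b : Fin m → V, β (tprod R a) (tprod R b)
      = ∑ i, tprod R (Function.update a i (br (Fin.cons (a i) b)))) (b : ⨂[R]^m V) :
    β.flip b = tensorDerivation (ρ.flip b) := by
  suffices β.flip = tensorDerivation ∘ₗ ρ.flip from LinearMap.congr_fun this b
  ext b a
  simp [tensorDerivation_tprod, act_tprod, bracket_tprod]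

theorem act_bracket_of_fundamentalIdentity (fund : FundamentalIdentity br)
    (act_tprod : ∀ x (a : Fin m → V), ρ x (tprod R a) = br (Fin.cons x a))
    (bracket_tprod : ∀ a b : Fin m → V, β (tprod R a) (tprod R b)
      = ∑ i, tprod R (Function.update a i (br (Fin.cons (a i) b)))) (v : V) (a b : ⨂[R]^m V) :
    ρ v (β a b) = ρ (ρ v a) b - ρ (ρ v b) a := by
  suffices β.compr₂ (ρ v) = ρ ∘ₗ ρ v - (ρ ∘ₗ ρ v).flip from LinearMap.congr_fun₂ this a b
  ext a b
  have fund_cons := fund (Fin.cons v a) b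
  simp only [Fin.sum_univ_succ, Fin.cons_zero, Fin.cons_succ, Fin.update_cons_zero,
    ← Fin.cons_update] at fund_cons
  simp [act_tprod, bracket_tprod, fund_cons]

theorem isLeibnizModule_tensorPower (fund : FundamentalIdentity br)
    (act_tprod : ∀ x (a : Fin m → V), ρ x (tprod R a) = br (Fin.cons x a))
    (bracket_tprod : ∀ a b : Fin m → V, β (tprod R a) (tprod R b)
      = ∑ i, tprod R (Function.update a i (br (Fin.cons (a i) b)))) :
    LodayChain.IsLeibnizModule ρ β where
  act_bracket := act_bracket_of_fundamentalIdentity fund act_tprod bracket_tprod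
  bracket_bracket x a b := by
    have flip_eq := flip_eq_tensorDerivation_flip act_tprod bracket_tprod
    have flip_bracket : ρ.flip (β a b) =
        (ρ.flip b * ρ.flip a - ρ.flip a * ρ.flip b : Module.End R V) :=
      LinearMap.ext fun v => act_bracket_of_fundamentalIdentity fund act_tprod bracket_tprod v a b
    have commutator : β.flip (β a b) =
        (β.flip b * β.flip a - β.flip a * β.flip b : Module.End R (⨂[R]^m V)) := by
      rw [flip_eq, flip_bracket, tensorDerivation_commutator, ← flip_eq, ← flip_eq]
    exact LinearMap.congr_fun commutator x

end TensorPower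

section ExteriorPower

variable {K : Type} [Field K] {g : Type} [AddCommGroup g] [Module K g] {m : ℕ}

variable (K g m) in
/-- The projection `⨂^m g → ⋀^m g` sending pure tensors to pure wedges. -/
noncomputable def tensorToExterior : (⨂[K]^m g) →ₗ[K] ⋀[K]^m g :=
  PiTensorProduct.lift (exteriorPower.ιMulti K m).toMultilinearMap

theorem tensorToExterior_tprod (a : Fin m → g) :
    tensorToExterior K g m (tprod K a) = wedge K a := by
  rw [tensorToExterior, lift.tprod]
  rfl

theorem range_tensorToExterior : LinearMap.range (tensorToExterior K g m) = ⊤ := by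
  rw [← top_le_iff, ← exteriorPower.ιMulti_span, Submodule.span_le]
  rintro _ ⟨a, rfl⟩
  exact ⟨tprod K a, tensorToExterior_tprod a⟩

theorem isNullExtension_tensorToExterior {br : MultilinearMap K (fun _ : Fin (m + 1) => g) g}
    {ρ : g →ₗ[K] (⨂[K]^m g) →ₗ[K] g} {β : (⨂[K]^m g) →ₗ[K] (⨂[K]^m g) →ₗ[K] (⨂[K]^m g)}
    {ρ' : g →ₗ[K] (⋀[K]^m g) →ₗ[K] g} {β' : (⋀[K]^m g) →ₗ[K] (⋀[K]^m g) →ₗ[K] (⋀[K]^m g)}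
    (act_tprod : ∀ x (a : Fin m → g), ρ x (tprod K a) = br (Fin.cons x a))
    (bracket_tprod : ∀ a b : Fin m → g, β (tprod K a) (tprod K b)
      = ∑ i, tprod K (Function.update a i (br (Fin.cons (a i) b))))
    (act_wedge : ∀ x (a : Fin m → g), ρ' x (wedge K a) = br (Fin.cons x a))
    (bracket_wedge : ∀ a b : Fin m → g, β' (wedge K a) (wedge K b)
      = ∑ i, wedge K (Function.update a i (br (Fin.cons (a i) b)))) :
    LodayChain.IsNullExtension (tensorToExterior K g m) ρ β ρ' β' := by
  have map_act (v : g) (h : ⨂[K]^m g) : ρ v h = ρ' v (tensorToExterior K g m h) := by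
    suffices ρ v = ρ' v ∘ₗ tensorToExterior K g m from LinearMap.congr_fun this h
    ext a
    simp [act_tprod, act_wedge, tensorToExterior_tprod]
  refine ⟨range_tensorToExterior, map_act, fun x h => ?_, fun {i} hi x => ?_⟩
  · suffices β.compr₂ (tensorToExterior K g m)
        = β'.compl₁₂ (tensorToExterior K g m) (tensorToExterior K g m) from
      LinearMap.congr_fun₂ this x h
    ext a b : 4
    simp only [LinearMap.compMultilinearMap_apply, LinearMap.compr₂_apply, LinearMap.compl₁₂_apply,
      bracket_tprod, bracket_wedge, map_sum, tensorToExterior_tprod]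
  · have act_i : ρ.flip i = 0 := LinearMap.ext fun v => by
      rw [LinearMap.flip_apply, map_act, hi, map_zero, LinearMap.zero_apply]
    rw [← LinearMap.flip_apply, flip_eq_tensorDerivation_flip act_tprod bracket_tprod, act_i,
      map_zero, LinearMap.zero_apply]

end ExteriorPower

theorem statement14_general (K : Type) [Field K]
    (g : Type) [AddCommGroup g] [Module K g] (m : ℕ)
    (br : MultilinearMap K (fun _ : Fin (m+1) => g) g)
    (fund : ∀ (x : Fin (m+1) → g) (y : Fin m → g),
      br (Fin.cons (br x) y)
        = ∑ i : Fin (m+1), br (Function.update x i (br (Fin.cons (x i) y))))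
    (ω₁ : (⨂[K]^m g) →ₗ[K] (⨂[K]^m g) →ₗ[K] (⨂[K]^m g))
    (hω₁ : ∀ a b : Fin m → g,
      ω₁ (tprod K a) (tprod K b)
        = ∑ i : Fin m, tprod K (Function.update a i (br (Fin.cons (a i) b))))
    (ω₀bar : (⋀[K]^m g) →ₗ[K] (⋀[K]^m g) →ₗ[K] (⋀[K]^m g))
    (hω₀bar : ∀ a b : Fin m → g,
      ω₀bar (wedge K a) (wedge K b)
        = ∑ i : Fin m, wedge K (Function.update a i (br (Fin.cons (a i) b))))
    (ωrD : g →ₗ[K] (⨂[K]^m g) →ₗ[K] g)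
    (hωrD : ∀ (x : g) (a : Fin m → g), ωrD x (tprod K a) = br (Fin.cons x a))
    (ωrL : g →ₗ[K] (⋀[K]^m g) →ₗ[K] g)
    (hωrL : ∀ (x : g) (a : Fin m → g), ωrL x (wedge K a) = br (Fin.cons x a))
    (dD : ∀ k : ℕ, (g ⊗[K] (⨂[K]^(k+1) (⨂[K]^m g))) →ₗ[K] (g ⊗[K] (⨂[K]^k (⨂[K]^m g))))
    (hdD : ∀ (k : ℕ) (v : g) (hs : Fin (k+1) → (⨂[K]^m g)),
      dD k (v ⊗ₜ[K] tprod K hs)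
        = (∑ j : Fin (k+1), ((-1 : K)^((j : ℕ)+1)) •
            ((ωrD v (hs j)) ⊗ₜ[K] tprod K (fun t => hs (j.succAbove t))))
        + ∑ j : Fin (k+1), ∑ i ∈ Finset.univ.filter (fun i : Fin (k+1) => i < j),
            ((-1 : K)^((j : ℕ))) •
              (v ⊗ₜ[K] tprod K
                (fun t => Function.update hs i (ω₁ (hs i) (hs j)) (j.succAbove t))))
    (dL : ∀ k : ℕ, (g ⊗[K] (⨂[K]^(k+1) (⋀[K]^m g))) →ₗ[K] (g ⊗[K] (⨂[K]^k (⋀[K]^m g))))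
    (hdL : ∀ (k : ℕ) (v : g) (hs : Fin (k+1) → (⋀[K]^m g)),
      dL k (v ⊗ₜ[K] tprod K hs)
        = (∑ j : Fin (k+1), ((-1 : K)^((j : ℕ)+1)) •
            ((ωrL v (hs j)) ⊗ₜ[K] tprod K (fun t => hs (j.succAbove t))))
        + ∑ j : Fin (k+1), ∑ i ∈ Finset.univ.filter (fun i : Fin (k+1) => i < j),
            ((-1 : K)^((j : ℕ))) •
              (v ⊗ₜ[K] tprod K
                (fun t => Function.update hs i (ω₀bar (hs i) (hs j)) (j.succAbove t)))) :
    (∀ k : ℕ,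
        Subsingleton (homologyC K (fun k => g ⊗[K] (⨂[K]^k (⋀[K]^m g))) dL k)) →
    ∀ k : ℕ,
      Subsingleton (homologyC K (fun k => g ⊗[K] (⨂[K]^k (⨂[K]^m g))) dD k) := by
  have dD_eq (k) : dD k = LodayChain.boundary ωrD ω₁ k :=
    LodayChain.hom_ext fun v hs => (hdD k v hs).trans (LodayChain.boundary_tprod ωrD ω₁ k v hs).symm
  have dL_eq (k) : dL k = LodayChain.boundary ωrL ω₀bar k :=
    LodayChain.hom_ext fun v hs =>
      (hdL k v hs).trans (LodayChain.boundary_tprod ωrL ω₀bar k v hs).symm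
  obtain rfl : dD = LodayChain.boundary ωrD ω₁ := funext dD_eq
  obtain rfl : dL = LodayChain.boundary ωrL ω₀bar := funext dL_eq
  intro lie_acyclic k
  refine (subsingleton_homologyC_iff _ k).2 ?_
  exact (isNullExtension_tensorToExterior hωrD hω₁ hωrL hω₀bar).isExactAt
    (isLeibnizModule_tensorPower fund hωrD hω₁)
    (fun j => (subsingleton_homologyC_iff _ j).1 (lie_acyclic j)) k

/-- Let `g` be an `n`-Filippov algebra over a field `K` of characteristic
`≠ 2`, with `n > 2` (write `n = m+1`, `2 ≤ m`) and `dim_K g ≥ n`.  If `ₙH^Lie_k(g;K) = 0`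
for all `k ≥ 0`, then `ₙHL_k(g;K) = 0` for all `k ≥ 0`.  Here `ₙHL_*(g;K)` is the homology of
the Loday complex `CL_*(Dₙ(g), g)` and `ₙH^Lie_*(g;K)` that of `CL_*(Lₙ(g), g)`. -/
theorem statement14 (K : Type) [Field K] (hchar : ringChar K ≠ 2)
    (g : Type) [AddCommGroup g] [Module K g] (m : ℕ) (hm : 2 ≤ m)
    (hdim : ((m + 1 : ℕ) : Cardinal) ≤ Module.rank K g)
    (br : MultilinearMap K (fun _ : Fin (m+1) => g) g)
    (fund : ∀ (x : Fin (m+1) → g) (y : Fin m → g),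
      br (Fin.cons (br x) y)
        = ∑ i : Fin (m+1), br (Function.update x i (br (Fin.cons (x i) y))))
    (alt : ∀ (x : Fin (m+1) → g) (i j : Fin (m+1)), i ≠ j → x i = x j → br x = 0)
    -- the Leibniz brackets ω₁ on Dₙ(g) and ω̄₀ on Lₙ(g)
    (ω₁ : (⨂[K]^m g) →ₗ[K] (⨂[K]^m g) →ₗ[K] (⨂[K]^m g))
    (hω₁ : ∀ a b : Fin m → g,
      ω₁ (tprod K a) (tprod K b)
        = ∑ i : Fin m, tprod K (Function.update a i (br (Fin.cons (a i) b))))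
    (ω₀bar : (⋀[K]^m g) →ₗ[K] (⋀[K]^m g) →ₗ[K] (⋀[K]^m g))
    (hω₀bar : ∀ a b : Fin m → g,
      ω₀bar (wedge K a) (wedge K b)
        = ∑ i : Fin m, wedge K (Function.update a i (br (Fin.cons (a i) b))))
    -- the right co-representation actions of Dₙ(g) and Lₙ(g) on g
    (ωrD : g →ₗ[K] (⨂[K]^m g) →ₗ[K] g)
    (hωrD : ∀ (x : g) (a : Fin m → g), ωrD x (tprod K a) = br (Fin.cons x a))
    (ωrL : g →ₗ[K] (⋀[K]^m g) →ₗ[K] g)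
    (hωrL : ∀ (x : g) (a : Fin m → g), ωrL x (wedge K a) = br (Fin.cons x a))
    -- the Loday boundary of ₙCL_*(g) = CL_*(Dₙ(g), g)
    (dD : ∀ k : ℕ, (g ⊗[K] (⨂[K]^(k+1) (⨂[K]^m g))) →ₗ[K] (g ⊗[K] (⨂[K]^k (⨂[K]^m g))))
    (hdD : ∀ (k : ℕ) (v : g) (hs : Fin (k+1) → (⨂[K]^m g)),
      dD k (v ⊗ₜ[K] tprod K hs)
        = (∑ j : Fin (k+1), ((-1 : K)^((j : ℕ)+1)) •
            ((ωrD v (hs j)) ⊗ₜ[K] tprod K (fun t => hs (j.succAbove t))))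
        + ∑ j : Fin (k+1), ∑ i ∈ Finset.univ.filter (fun i : Fin (k+1) => i < j),
            ((-1 : K)^((j : ℕ))) •
              (v ⊗ₜ[K] tprod K
                (fun t => Function.update hs i (ω₁ (hs i) (hs j)) (j.succAbove t))))
    -- the Loday boundary of ₙC_*(g) = CL_*(Lₙ(g), g)
    (dL : ∀ k : ℕ, (g ⊗[K] (⨂[K]^(k+1) (⋀[K]^m g))) →ₗ[K] (g ⊗[K] (⨂[K]^k (⋀[K]^m g))))
    (hdL : ∀ (k : ℕ) (v : g) (hs : Fin (k+1) → (⋀[K]^m g)),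
      dL k (v ⊗ₜ[K] tprod K hs)
        = (∑ j : Fin (k+1), ((-1 : K)^((j : ℕ)+1)) •
            ((ωrL v (hs j)) ⊗ₜ[K] tprod K (fun t => hs (j.succAbove t))))
        + ∑ j : Fin (k+1), ∑ i ∈ Finset.univ.filter (fun i : Fin (k+1) => i < j),
            ((-1 : K)^((j : ℕ))) •
              (v ⊗ₜ[K] tprod K
                (fun t => Function.update hs i (ω₀bar (hs i) (hs j)) (j.succAbove t)))) :
    (∀ k : ℕ,
        Subsingleton (homologyC K (fun k => g ⊗[K] (⨂[K]^k (⋀[K]^m g))) dL k)) →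
    ∀ k : ℕ,
      Subsingleton (homologyC K (fun k => g ⊗[K] (⨂[K]^k (⨂[K]^m g))) dD k) := by
  exact statement14_general K g m br fund ω₁ hω₁ ω₀bar hω₀bar ωrD hωrD ωrL hωrL dD hdD dL hdL
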